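/- arXiv:1601.07109 — 2 statements merged into one kernel-verified Lean document; each statement's English description precedes it below -/
import Mathlib

section
/- Let c be the orientation cocycle c(z₀, ..., z₄) = −(ζ(2)/2)·(−1)^{(z₀,...,z₄)}. Then for all 0 < φ₁ < φ₂ < 2π, F_c^♭(φ₁, φ₂) = −(ζ(2)/(4π²))·((3φ₁ − 2π)(cos(φ₂) − 1) − (3φ₂ − 4π)(cos(φ₁) − 1)) + (3ζ(2)/(2π²))·(sin(φ₁)·log(sin((φ₂−φ₁)/2)/sin(φ₁/2)) − sin(φ₂)·log(sin((φ₂−φ₁)/2)/sin(φ₂/2))). -/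
open Real Complex

/-- A tuple `(z₁, …, z_k)` of points of `S¹` is *cyclically oriented* if it can be written as
`z_j = e^{iθ_j}` with `θ₁ < θ₂ < ⋯ < θ_k < θ₁ + 2π`. -/
def CyclicallyOriented {k : ℕ} (z : Fin k → ℂ) : Prop :=
  ∃ θ : Fin k → ℝ, StrictMono θ ∧ (∀ i j : Fin k, θ j < θ i + 2 * Real.pi) ∧
    ∀ j, z j = Complex.exp (θ j * Complex.I)

/-- `c` is the cocycle `c(z̲) = -(ζ(2)/2)·(-1)^{z̲}` (with `ζ(2) = π²/6`), i.e. whenever a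
permutation `σ` brings the tuple `z̲` into cyclically oriented position, `c(z̲)` equals
`-(ζ(2)/2)·sgn(σ)`. -/
def OrientationProp (c : (Fin 5 → ℂ) → ℝ) : Prop :=
  ∀ (z : Fin 5 → ℂ) (σ : Equiv.Perm (Fin 5)),
    CyclicallyOriented (fun i => z (σ i)) →
    c z = -(π ^ 2 / 6 / 2) * ((Equiv.Perm.sign σ : ℤ) : ℝ)

/-- The function `r_c(φ) = -(1/2)(1-e^{iφ})·∫_π^φ (1-cos ζ)⁻¹ ⨍⨍⨍ sin(η-ϕ)·
c(e^{iη}, e^{iϕ}, e^{iψ}, 1, e^{iζ}) dη dϕ dψ dζ`, where `⨍ = (1/2π)∫₀^{2π}`. -/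
noncomputable def rc (c : (Fin 5 → ℂ) → ℝ) (φ : ℝ) : ℂ :=
  -(1 / 2 : ℂ) * (1 - Complex.exp (φ * Complex.I)) *
    ((∫ ζ in (π : ℝ)..φ, (1 - Real.cos ζ)⁻¹ *
        ((1 / (2 * π)) ^ 3 *
          ∫ η in (0:ℝ)..(2 * π), ∫ ϕ in (0:ℝ)..(2 * π), ∫ ψ in (0:ℝ)..(2 * π),
            Real.sin (η - ϕ) *
              c ![Complex.exp (η * Complex.I), Complex.exp (ϕ * Complex.I),
                  Complex.exp (ψ * Complex.I), 1, Complex.exp (ζ * Complex.I)]) : ℝ) : ℂ)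

/-- `θ₁ ⊖ θ₂`: the unique representative of `θ₁ - θ₂` modulo `2π` in `[0, 2π)`. -/
noncomputable def ominus (θ₁ θ₂ : ℝ) : ℝ := toIcoMod Real.two_pi_pos 0 (θ₁ - θ₂)

/-- `v_c^♭(θ₁, θ₂) = Im(e^{iθ₁}·r_c(θ₂ ⊖ θ₁))`. -/
noncomputable def vflat (c : (Fin 5 → ℂ) → ℝ) (θ₁ θ₂ : ℝ) : ℝ :=
  (Complex.exp (θ₁ * Complex.I) * rc c (ominus θ₂ θ₁)).im

/-- `F_c^♭(φ₁, φ₂) = ⨍⨍ sin(ϕ)·c(e^{iη}, e^{iϕ}, 1, e^{iφ₁}, e^{iφ₂}) dη dϕ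
+ v_c^♭(φ₁, φ₂) - v_c^♭(0, φ₂) + v_c^♭(0, φ₁)`. -/
noncomputable def Fflat (c : (Fin 5 → ℂ) → ℝ) (φ₁ φ₂ : ℝ) : ℝ :=
  (1 / (2 * π)) ^ 2 *
      (∫ η in (0:ℝ)..(2 * π), ∫ ϕ in (0:ℝ)..(2 * π),
        Real.sin ϕ * c ![Complex.exp (η * Complex.I), Complex.exp (ϕ * Complex.I), 1,
          Complex.exp (φ₁ * Complex.I), Complex.exp (φ₂ * Complex.I)])
    + vflat c φ₁ φ₂ - vflat c 0 φ₂ + vflat c 0 φ₁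

/-!
The sign of the permutation sorting real angles is the sign of their Vandermonde product. Once one
of the five points is normalised to `1`, only four angles in `(0, 2π)` remain, and for four points
the sign Vandermonde product equals the Pfaffian of the matrix `sign (t_j - t_i)`, a sum of products
in which every variable occurs in one factor only. The averages therefore reduce to one-variable
integrals `∫ f x * sign (y - x) dx = 2 F y - F a - F b` with `F` a primitive of `f`. The
remaining integral defining `r_c` has the primitive `(π - x) cot (x / 2) + 6 log sin (x / 2)`, and
the cotangent disappears from `v_c^♭` because
`(sin a - sin b) cot ((b - a) / 2) = -(cos a + cos b)`.
-/

/-- The sign of the Vandermonde product `∏_{i < j} (t_j - t_i)`. For pairwise distinct reals it is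
the sign of the permutation that sorts `t`. -/
noncomputable def signVandermonde {n : ℕ} (t : Fin n → ℝ) : ℝ :=
  ∏ i, ∏ j ∈ Finset.Ioi i, Real.sign (t j - t i)

lemma sign_sub_comm (x y : ℝ) : Real.sign (x - y) = -Real.sign (y - x) := by
  rw [← Real.sign_neg, neg_sub]

lemma signVandermonde_comp_perm {n : ℕ} (t : Fin n → ℝ) (σ : Equiv.Perm (Fin n)) :
    signVandermonde (t ∘ σ) = (Equiv.Perm.sign σ : ℤ) * signVandermonde t :=
  σ.prod_Ioi_comp_eq_sign_mul_prod (f := fun i j => Real.sign (t j - t i))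
    fun i j => sign_sub_comm (t j) (t i)

lemma signVandermonde_of_strictMono {n : ℕ} {t : Fin n → ℝ} (ht : StrictMono t) :
    signVandermonde t = 1 :=
  Finset.prod_eq_one fun _ _ => Finset.prod_eq_one fun _ hj =>
    Real.sign_of_pos (sub_pos.2 (ht (Finset.mem_Ioi.1 hj)))

lemma strictMono_comp_sort {α : Type*} [LinearOrder α] {n : ℕ} {t : Fin n → α}
    (ht : Function.Injective t) :
    StrictMono (t ∘ Tuple.sort t) :=
  (Tuple.monotone_sort t).strictMono_of_injective (ht.comp (Tuple.sort t).injective)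

lemma sign_sort_eq_signVandermonde {n : ℕ} {t : Fin n → ℝ} (ht : Function.Injective t) :
    ((Equiv.Perm.sign (Tuple.sort t) : ℤ) : ℝ) = signVandermonde t := by
  have hprod := signVandermonde_comp_perm t (Tuple.sort t)
  rw [signVandermonde_of_strictMono (strictMono_comp_sort ht)] at hprod
  rcases Int.units_eq_one_or (Equiv.Perm.sign (Tuple.sort t)) with hσ | hσ <;>
    rw [hσ] at hprod ⊢ <;> push_cast at hprod ⊢ <;> linarith

lemma signVandermonde_cons_of_lt {n : ℕ} {a : ℝ} {t : Fin n → ℝ} (ha : ∀ i, a < t i) :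
    signVandermonde (Fin.cons a t : Fin (n + 1) → ℝ) = signVandermonde t := by
  simp [signVandermonde, Fin.prod_univ_succ, Fin.prod_Ioi_succ,
    Real.sign_of_pos (sub_pos.2 (ha _))]

lemma signVandermonde_insertNth_of_lt {n : ℕ} (k : Fin (n + 1)) {a : ℝ} {t : Fin n → ℝ}
    (ha : ∀ i, a < t i) :
    signVandermonde (k.insertNth a t : Fin (n + 1) → ℝ) = (-1) ^ (k : ℕ) * signVandermonde t := by
  rw [← Fin.cons_comp_cycleRange, signVandermonde_comp_perm, Fin.sign_cycleRange,
    signVandermonde_cons_of_lt ha]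
  push_cast
  rfl

lemma injective_insertNth_of_lt {α : Type*} [Preorder α] {n : ℕ} (k : Fin (n + 1)) {a : α}
    {t : Fin n → α} (ha : ∀ i, a < t i) (ht : Function.Injective t) :
    Function.Injective (k.insertNth a t : Fin (n + 1) → α) := by
  rw [← Fin.cons_comp_cycleRange]
  refine (Fin.cons_injective_iff.2 ⟨?_, ht⟩).comp k.cycleRange.injective
  rintro ⟨i, hi⟩
  exact (ha i).ne' hi

/-- The Pfaffian of the `4 × 4` antisymmetric matrix `sign (t_j - t_i)` for `t = (x, y, z, w)`. It
separates the variables in the sign Vandermonde product of four points. -/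
noncomputable def signPfaffian (x y z w : ℝ) : ℝ :=
  Real.sign (y - x) * Real.sign (w - z) - Real.sign (z - x) * Real.sign (w - y)
    + Real.sign (w - x) * Real.sign (z - y)

-- Both sides are antisymmetric, and for `x < y < z < w` the identity reads `1 = 1 - 1 + 1`.
lemma signVandermonde_four (x y z w : ℝ) :
    signVandermonde ![x, y, z, w] = signPfaffian x y z w := by
  have hprod : signVandermonde ![x, y, z, w] =
      Real.sign (y - x) * (Real.sign (z - x) * Real.sign (w - x)) *
        (Real.sign (z - y) * Real.sign (w - y) * Real.sign (w - z)) := by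
    simp [signVandermonde, Fin.prod_univ_succ, Fin.prod_Ioi_succ]
  rw [hprod, signPfaffian]
  grind [Real.sign]

lemma cyclicallyOriented_exp_comp_sort {n : ℕ} {t : Fin n → ℝ} (ht : Function.Injective t)
    (hwidth : ∀ i j, t j < t i + 2 * π) :
    CyclicallyOriented fun i => Complex.exp (t (Tuple.sort t i) * Complex.I) :=
  ⟨t ∘ Tuple.sort t, strictMono_comp_sort ht, fun _ _ => hwidth _ _, fun _ => rfl⟩

namespace OrientationProp

variable {c : (Fin 5 → ℂ) → ℝ}

lemma apply_exp (hc : OrientationProp c) {t : Fin 5 → ℝ} (ht : Function.Injective t)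
    (hwidth : ∀ i j, t j < t i + 2 * π) :
    c (fun i => Complex.exp (t i * Complex.I)) = -(π ^ 2 / 6 / 2) * signVandermonde t := by
  rw [hc _ _ (cyclicallyOriented_exp_comp_sort ht hwidth), sign_sort_eq_signVandermonde ht]

lemma apply_insertNth_one (hc : OrientationProp c) (k : Fin 5) {t : Fin 4 → ℝ}
    (ht : Function.Injective t) (hmem : ∀ i, t i ∈ Set.Ioo 0 (2 * π)) :
    c (k.insertNth 1 fun i => Complex.exp (t i * Complex.I)) =
      -(π ^ 2 / 6 / 2) * ((-1) ^ (k : ℕ) * signVandermonde t) := by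
  have hpos : ∀ i, 0 < t i := fun i => (hmem i).1
  have hIco : ∀ i, (k.insertNth 0 t : Fin 5 → ℝ) i ∈ Set.Ico 0 (2 * π) := by
    rw [Fin.forall_iff_succAbove k]
    simpa [Real.pi_pos] using fun i => Set.Ioo_subset_Ico_self (hmem i)
  have hexp : (fun i => Complex.exp ((k.insertNth 0 t : Fin 5 → ℝ) i * Complex.I)) =
      k.insertNth 1 fun i => Complex.exp (t i * Complex.I) := by
    rw [Fin.eq_insertNth_iff]
    simp [funext_iff, Fin.removeNth]
  rw [← hexp, hc.apply_exp (injective_insertNth_of_lt k hpos ht)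
    fun i j => by linarith [(hIco i).1, (hIco j).2], signVandermonde_insertNth_of_lt k hpos]

lemma apply_one_at_two (hc : OrientationProp c) {x y z w : ℝ} (hne : [x, y, z, w].Nodup)
    (hmem : ∀ i, ![x, y, z, w] i ∈ Set.Ioo 0 (2 * π)) :
    c ![Complex.exp (x * Complex.I), Complex.exp (y * Complex.I), 1,
        Complex.exp (z * Complex.I), Complex.exp (w * Complex.I)] =
      -(π ^ 2 / 6 / 2) * signPfaffian x y z w := by
  convert! hc.apply_insertNth_one 2 (t := ![x, y, z, w]) (List.nodup_ofFn.1 hne) hmem using 2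
  · ext i
    fin_cases i <;> rfl
  · simp [signVandermonde_four]

lemma apply_one_at_three (hc : OrientationProp c) {x y z w : ℝ} (hne : [x, y, z, w].Nodup)
    (hmem : ∀ i, ![x, y, z, w] i ∈ Set.Ioo 0 (2 * π)) :
    c ![Complex.exp (x * Complex.I), Complex.exp (y * Complex.I), Complex.exp (z * Complex.I), 1,
        Complex.exp (w * Complex.I)] =
      π ^ 2 / 6 / 2 * signPfaffian x y z w := by
  rw [← neg_neg (π ^ 2 / 6 / 2), neg_mul, ← mul_neg]
  convert! hc.apply_insertNth_one 3 (t := ![x, y, z, w]) (List.nodup_ofFn.1 hne) hmem using 2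
  · ext i
    fin_cases i <;> rfl
  · simp [signVandermonde_four, pow_succ]

end OrientationProp

lemma intervalIntegral_congr_of_countable {E : Type*} [NormedAddCommGroup E] [NormedSpace ℝ E]
    {f g : ℝ → E} {a b : ℝ} {s : Set ℝ} (hs : s.Countable)
    (h : ∀ x ∈ Set.uIoo a b, x ∉ s → f x = g x) : ∫ x in a..b, f x = ∫ x in a..b, g x := by
  have hae : ∀ᵐ x, x ∉ s ∪ {a, b} :=
    (hs.union (Set.toFinite {a, b}).countable).ae_notMem MeasureTheory.volume
  refine intervalIntegral.integral_congr_ae (hae.mono fun x hx hmem => h x ?_ ?_) <;>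
    grind [Set.uIoo, Set.uIoc]

lemma measurable_real_sign : Measurable Real.sign :=
  Monotone.measurable fun x y hxy => by grind [Real.sign]

lemma norm_real_sign_le_one (x : ℝ) : ‖Real.sign x‖ ≤ 1 := by
  rcases Real.sign_apply_eq x with h | h | h <;> simp [h]

lemma intervalIntegrable_mul_sign_sub {f : ℝ → ℝ} {a b : ℝ}
    (hf : IntervalIntegrable f MeasureTheory.volume a b) (y : ℝ) :
    IntervalIntegrable (fun x => f x * Real.sign (y - x)) MeasureTheory.volume a b := by
  have hmeas : Measurable fun x => Real.sign (y - x) :=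
    measurable_real_sign.comp (measurable_const.sub measurable_id)
  rw [intervalIntegrable_iff] at hf ⊢
  exact hf.mul_bdd hmeas.aestronglyMeasurable (.of_forall fun x => norm_real_sign_le_one _)

lemma integral_mul_sign_sub {f : ℝ → ℝ} {a b y : ℝ}
    (hf : IntervalIntegrable f MeasureTheory.volume a b) (hy : y ∈ Set.Icc a b) :
    ∫ x in a..b, f x * Real.sign (y - x) = (∫ x in a..y, f x) - ∫ x in y..b, f x := by
  have hleft : ∫ x in a..y, f x * Real.sign (y - x) = ∫ x in a..y, f x := by
    refine intervalIntegral.integral_congr_uIoo fun x hx => ?_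
    rw [Set.uIoo_of_le hy.1] at hx
    simp only [Real.sign_of_pos (sub_pos.2 hx.2), mul_one]
  have hright : ∫ x in y..b, f x * Real.sign (y - x) = -∫ x in y..b, f x := by
    rw [← intervalIntegral.integral_neg]
    refine intervalIntegral.integral_congr_uIoo fun x hx => ?_
    rw [Set.uIoo_of_le hy.2] at hx
    simp only [Real.sign_of_neg (sub_neg.2 hx.1), mul_neg_one]
  have hint := intervalIntegrable_mul_sign_sub hf y
  have hmem : y ∈ Set.uIcc a b := Set.Icc_subset_uIcc hy
  rw [← intervalIntegral.integral_add_adjacent_intervals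
      (hint.mono_set (Set.uIcc_subset_uIcc_left hmem))
      (hint.mono_set (Set.uIcc_subset_uIcc_right hmem)), hleft, hright, sub_eq_add_neg]

lemma integral_mul_sign_sub_of_hasDerivAt {f F : ℝ → ℝ} {a b y : ℝ} (hf : Continuous f)
    (hF : ∀ x, HasDerivAt F (f x) x) (hy : y ∈ Set.Icc a b) :
    ∫ x in a..b, f x * Real.sign (y - x) = 2 * F y - F a - F b := by
  have hftc (u v : ℝ) : ∫ x in u..v, f x = F v - F u :=
    intervalIntegral.integral_eq_sub_of_hasDerivAt (fun x _ => hF x) (hf.intervalIntegrable u v)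
  rw [integral_mul_sign_sub (hf.intervalIntegrable a b) hy, hftc, hftc]
  ring

lemma integral_sign_sub {a b y : ℝ} (hy : y ∈ Set.Icc a b) :
    ∫ x in a..b, Real.sign (y - x) = 2 * y - a - b := by
  simpa using integral_mul_sign_sub_of_hasDerivAt continuous_const hasDerivAt_id hy

lemma integral_cos_mul_sign_sub {y : ℝ} (hy : y ∈ Set.Icc 0 (2 * π)) :
    ∫ x in (0 : ℝ)..2 * π, Real.cos x * Real.sign (y - x) = 2 * Real.sin y := by
  simpa using integral_mul_sign_sub_of_hasDerivAt Real.continuous_cos Real.hasDerivAt_sin hy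

lemma integral_sin_sub_mul_sign_sub (u : ℝ) {y : ℝ} (hy : y ∈ Set.Icc 0 (2 * π)) :
    ∫ x in (0 : ℝ)..2 * π, Real.sin (u - x) * Real.sign (y - x) =
      2 * (Real.cos (u - y) - Real.cos u) := by
  have hderiv (x : ℝ) : HasDerivAt (fun x => Real.cos (u - x)) (Real.sin (u - x)) x := by
    simpa using ((hasDerivAt_id x).const_sub u).cos
  rw [integral_mul_sign_sub_of_hasDerivAt (by fun_prop) hderiv hy, sub_zero, Real.cos_sub_two_pi]
  ring

lemma integral_sin_mul_sign_sub {y : ℝ} (hy : y ∈ Set.Icc 0 (2 * π)) :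
    ∫ x in (0 : ℝ)..2 * π, Real.sin x * Real.sign (y - x) = 2 * (1 - Real.cos y) := by
  have h := integral_sin_sub_mul_sign_sub 0 hy
  simp only [zero_sub, Real.sin_neg, neg_mul, intervalIntegral.integral_neg, Real.cos_neg,
    Real.cos_zero] at h
  linarith

lemma integral_cos_sub_one : ∫ x in (0 : ℝ)..2 * π, (Real.cos x - 1) = -(2 * π) := by
  simp

lemma integral_pi_sub_mul_sin_sub (u : ℝ) :
    ∫ x in (0 : ℝ)..2 * π, (π - x) * Real.sin (u - x) = -2 * π * Real.cos u := by
  have hderiv (x : ℝ) : HasDerivAt (fun x => (π - x) * Real.cos (u - x) - Real.sin (u - x))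
      ((π - x) * Real.sin (u - x)) x := by
    have hsub (v : ℝ) : HasDerivAt (fun x => v - x) (-1) x := by
      simpa using (hasDerivAt_id x).const_sub v
    exact (((hsub π).mul (hsub u).cos).sub (hsub u).sin).congr_deriv (by ring)
  rw [intervalIntegral.integral_eq_sub_of_hasDerivAt (fun x _ => hderiv x)
    (Continuous.intervalIntegrable (by fun_prop) _ _), Real.cos_sub_two_pi, Real.sin_sub_two_pi,
    sub_zero, sub_zero]
  ring

lemma integral_pi_sub_mul_cos_sub (u : ℝ) :
    ∫ x in (0 : ℝ)..2 * π, (π - x) * Real.cos (u - x) = 2 * π * Real.sin u := by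
  simpa [Real.sin_add_pi_div_two, add_sub_right_comm, Real.cos_add_pi_div_two] using
    integral_pi_sub_mul_sin_sub (u + π / 2)

lemma intervalIntegrable_const_mul_sign_sub (r y a b : ℝ) :
    IntervalIntegrable (fun x => r * Real.sign (y - x)) MeasureTheory.volume a b :=
  intervalIntegrable_mul_sign_sub intervalIntegrable_const y

lemma integral_signPfaffian {a b x y w : ℝ} (hx : x ∈ Set.Icc a b) (hy : y ∈ Set.Icc a b)
    (hw : w ∈ Set.Icc a b) :
    ∫ z in a..b, signPfaffian x y z w =
      Real.sign (y - x) * (2 * w - a - b) + Real.sign (w - y) * (2 * x - a - b)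
        - Real.sign (w - x) * (2 * y - a - b) := by
  have hsplit (z : ℝ) : signPfaffian x y z w = Real.sign (y - x) * Real.sign (w - z)
      + Real.sign (w - y) * Real.sign (x - z) - Real.sign (w - x) * Real.sign (y - z) := by
    rw [signPfaffian, sign_sub_comm z x, sign_sub_comm z y]
    ring
  have hint (r u : ℝ) := intervalIntegrable_const_mul_sign_sub r u a b
  simp only [hsplit]
  rw [intervalIntegral.integral_sub ((hint _ _).add (hint _ _)) (hint _ _),
    intervalIntegral.integral_add (hint _ _) (hint _ _)]
  simp only [intervalIntegral.integral_const_mul, integral_sign_sub, hx, hy, hw]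

lemma integral_integral_sin_sub_mul_signPfaffian {η ζ : ℝ} (hη : η ∈ Set.Icc 0 (2 * π))
    (hζ : ζ ∈ Set.Icc 0 (2 * π)) :
    ∫ ϕ in (0 : ℝ)..2 * π, ∫ ψ in (0 : ℝ)..2 * π, Real.sin (η - ϕ) * signPfaffian η ϕ ψ ζ =
      4 * ((ζ - π) * (Real.cos η - 1) - (π - η) * (Real.cos (ζ - η) - Real.cos η)
        - π * (Real.cos η * Real.sign (ζ - η))) := by
  have hinner : ∀ ϕ ∈ Set.uIcc 0 (2 * π),
      ∫ ψ in (0 : ℝ)..2 * π, Real.sin (η - ϕ) * signPfaffian η ϕ ψ ζ =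
        2 * (π - ζ) * (Real.sin (η - ϕ) * Real.sign (η - ϕ))
          + 2 * (η - π) * (Real.sin (η - ϕ) * Real.sign (ζ - ϕ))
          + 2 * Real.sign (ζ - η) * ((π - ϕ) * Real.sin (η - ϕ)) := fun ϕ hϕ => by
    rw [Set.uIcc_of_le Real.two_pi_pos.le] at hϕ
    rw [intervalIntegral.integral_const_mul, integral_signPfaffian hη hϕ hζ, sign_sub_comm ϕ η]
    ring
  have hint (r y : ℝ) : IntervalIntegrable
      (fun ϕ => r * (Real.sin (η - ϕ) * Real.sign (y - ϕ))) MeasureTheory.volume 0 (2 * π) :=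
    (intervalIntegrable_mul_sign_sub
      (Continuous.intervalIntegrable (by fun_prop) _ _) y).const_mul r
  rw [intervalIntegral.integral_congr hinner,
    intervalIntegral.integral_add ((hint _ _).add (hint _ _))
      (Continuous.intervalIntegrable (by fun_prop) _ _),
    intervalIntegral.integral_add (hint _ _) (hint _ _)]
  simp only [intervalIntegral.integral_const_mul, integral_sin_sub_mul_sign_sub η hη,
    integral_sin_sub_mul_sign_sub η hζ, integral_pi_sub_mul_sin_sub, sub_self, Real.cos_zero]
  rw [← Real.cos_neg (η - ζ), neg_sub]
  ring

lemma integral_integral_integral_sin_sub_mul_signPfaffian {ζ : ℝ} (hζ : ζ ∈ Set.Icc 0 (2 * π)) :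
    ∫ η in (0 : ℝ)..2 * π, ∫ ϕ in (0 : ℝ)..2 * π, ∫ ψ in (0 : ℝ)..2 * π,
        Real.sin (η - ϕ) * signPfaffian η ϕ ψ ζ =
      -(8 * π) * (ζ - π + 2 * Real.sin ζ) := by
  have hinner : ∀ η ∈ Set.uIcc 0 (2 * π),
      ∫ ϕ in (0 : ℝ)..2 * π, ∫ ψ in (0 : ℝ)..2 * π, Real.sin (η - ϕ) * signPfaffian η ϕ ψ ζ =
        4 * (ζ - π) * (Real.cos η - 1) - 4 * ((π - η) * Real.cos (ζ - η))
          + 4 * ((π - η) * Real.cos (0 - η)) - 4 * π * (Real.cos η * Real.sign (ζ - η)) :=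
      fun η hη => by
    rw [Set.uIcc_of_le Real.two_pi_pos.le] at hη
    rw [integral_integral_sin_sub_mul_signPfaffian hη hζ, zero_sub, Real.cos_neg]
    ring
  have hsign : IntervalIntegrable (fun η => 4 * π * (Real.cos η * Real.sign (ζ - η)))
      MeasureTheory.volume 0 (2 * π) :=
    (intervalIntegrable_mul_sign_sub (Real.continuous_cos.intervalIntegrable _ _) ζ).const_mul _
  rw [intervalIntegral.integral_congr hinner,
    intervalIntegral.integral_sub (Continuous.intervalIntegrable (by fun_prop) _ _) hsign,
    intervalIntegral.integral_add (Continuous.intervalIntegrable (by fun_prop) _ _)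
      (Continuous.intervalIntegrable (by fun_prop) _ _),
    intervalIntegral.integral_sub (Continuous.intervalIntegrable (by fun_prop) _ _)
      (Continuous.intervalIntegrable (by fun_prop) _ _)]
  simp only [intervalIntegral.integral_const_mul, integral_cos_sub_one, integral_pi_sub_mul_cos_sub,
    integral_cos_mul_sign_sub hζ, Real.sin_zero]
  ring

lemma integral_sin_mul_signPfaffian {η a b : ℝ} (hη : η ∈ Set.Icc 0 (2 * π))
    (ha : a ∈ Set.Icc 0 (2 * π)) (hb : b ∈ Set.Icc 0 (2 * π)) :
    ∫ ϕ in (0 : ℝ)..2 * π, Real.sin ϕ * signPfaffian η ϕ a b =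
      2 * (Real.sign (b - a) * (Real.cos η - 1) - (1 - Real.cos b) * Real.sign (a - η)
        + (1 - Real.cos a) * Real.sign (b - η)) := by
  have hsplit (ϕ : ℝ) : Real.sin ϕ * signPfaffian η ϕ a b =
      -Real.sign (b - a) * (Real.sin ϕ * Real.sign (η - ϕ))
        + -Real.sign (a - η) * (Real.sin ϕ * Real.sign (b - ϕ))
        + Real.sign (b - η) * (Real.sin ϕ * Real.sign (a - ϕ)) := by
    rw [signPfaffian, sign_sub_comm ϕ η]
    ring
  have hint (r y : ℝ) : IntervalIntegrable (fun ϕ => r * (Real.sin ϕ * Real.sign (y - ϕ)))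
      MeasureTheory.volume 0 (2 * π) :=
    (intervalIntegrable_mul_sign_sub (Real.continuous_sin.intervalIntegrable _ _) y).const_mul r
  simp only [hsplit]
  rw [intervalIntegral.integral_add ((hint _ _).add (hint _ _)) (hint _ _),
    intervalIntegral.integral_add (hint _ _) (hint _ _)]
  simp only [intervalIntegral.integral_const_mul, integral_sin_mul_sign_sub, hη, ha, hb]
  ring

lemma integral_integral_sin_mul_signPfaffian {a b : ℝ} (ha : a ∈ Set.Icc 0 (2 * π))
    (hb : b ∈ Set.Icc 0 (2 * π)) :
    ∫ η in (0 : ℝ)..2 * π, ∫ ϕ in (0 : ℝ)..2 * π, Real.sin ϕ * signPfaffian η ϕ a b =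
      4 * ((b - π) * (1 - Real.cos a) - (a - π) * (1 - Real.cos b) - π * Real.sign (b - a)) := by
  have hinner : ∀ η ∈ Set.uIcc 0 (2 * π),
      ∫ ϕ in (0 : ℝ)..2 * π, Real.sin ϕ * signPfaffian η ϕ a b =
        2 * Real.sign (b - a) * (Real.cos η - 1) + -2 * (1 - Real.cos b) * Real.sign (a - η)
          + 2 * (1 - Real.cos a) * Real.sign (b - η) := fun η hη => by
    rw [Set.uIcc_of_le Real.two_pi_pos.le] at hη
    rw [integral_sin_mul_signPfaffian hη ha hb]
    ring
  have hint (r u : ℝ) := intervalIntegrable_const_mul_sign_sub r u 0 (2 * π)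
  have hcont : IntervalIntegrable (fun η => 2 * Real.sign (b - a) * (Real.cos η - 1))
      MeasureTheory.volume 0 (2 * π) := Continuous.intervalIntegrable (by fun_prop) _ _
  rw [intervalIntegral.integral_congr hinner,
    intervalIntegral.integral_add (hcont.add (hint _ _)) (hint _ _),
    intervalIntegral.integral_add hcont (hint _ _)]
  simp only [intervalIntegral.integral_const_mul, integral_cos_sub_one, integral_sign_sub, ha, hb]
  ring

namespace OrientationProp

variable {c : (Fin 5 → ℂ) → ℝ}

lemma integral_integral_integral_sin_sub_mul (hc : OrientationProp c) {ζ : ℝ}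
    (hζ : ζ ∈ Set.Ioo 0 (2 * π)) :
    ∫ η in (0 : ℝ)..2 * π, ∫ ϕ in (0 : ℝ)..2 * π, ∫ ψ in (0 : ℝ)..2 * π,
        Real.sin (η - ϕ) * c ![Complex.exp (η * Complex.I), Complex.exp (ϕ * Complex.I),
          Complex.exp (ψ * Complex.I), 1, Complex.exp (ζ * Complex.I)] =
      -(2 * π ^ 3 / 3) * (ζ - π + 2 * Real.sin ζ) := by
  trans ∫ η in (0 : ℝ)..2 * π, ∫ ϕ in (0 : ℝ)..2 * π, ∫ ψ in (0 : ℝ)..2 * π,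
        π ^ 2 / 6 / 2 * (Real.sin (η - ϕ) * signPfaffian η ϕ ψ ζ)
  · refine intervalIntegral_congr_of_countable (Set.countable_singleton ζ) fun η hη hηs => ?_
    refine intervalIntegral_congr_of_countable (Set.toFinite {η, ζ}).countable fun ϕ hϕ hϕs => ?_
    refine intervalIntegral_congr_of_countable (Set.toFinite {η, ϕ, ζ}).countable
      fun ψ hψ hψs => ?_
    rw [Set.uIoo_of_le Real.two_pi_pos.le] at hη hϕ hψ
    rw [hc.apply_one_at_three ?_ ?_]
    · ring
    · grind
    · simpa [Fin.forall_fin_succ] using ⟨hη, hϕ, hψ, hζ⟩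
  · simp only [intervalIntegral.integral_const_mul (π ^ 2 / 6 / 2)]
    rw [integral_integral_integral_sin_sub_mul_signPfaffian (Set.Ioo_subset_Icc_self hζ)]
    ring

lemma integral_integral_sin_mul (hc : OrientationProp c) {a b : ℝ} (ha : 0 < a)
    (hab : a < b) (hb : b < 2 * π) :
    ∫ η in (0 : ℝ)..2 * π, ∫ ϕ in (0 : ℝ)..2 * π,
        Real.sin ϕ * c ![Complex.exp (η * Complex.I), Complex.exp (ϕ * Complex.I), 1,
          Complex.exp (a * Complex.I), Complex.exp (b * Complex.I)] =
      -(π ^ 2 / 3) * ((b - π) * (1 - Real.cos a) - (a - π) * (1 - Real.cos b) - π) := by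
  have hmem_a : a ∈ Set.Ioo 0 (2 * π) := ⟨ha, hab.trans hb⟩
  have hmem_b : b ∈ Set.Ioo 0 (2 * π) := ⟨ha.trans hab, hb⟩
  trans ∫ η in (0 : ℝ)..2 * π, ∫ ϕ in (0 : ℝ)..2 * π,
        -(π ^ 2 / 6 / 2) * (Real.sin ϕ * signPfaffian η ϕ a b)
  · refine intervalIntegral_congr_of_countable (Set.toFinite {a, b}).countable fun η hη hηs => ?_
    refine intervalIntegral_congr_of_countable (Set.toFinite {η, a, b}).countable
      fun ϕ hϕ hϕs => ?_
    rw [Set.uIoo_of_le Real.two_pi_pos.le] at hη hϕ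
    rw [hc.apply_one_at_two ?_ ?_]
    · ring
    · grind
    · simpa [Fin.forall_fin_succ] using ⟨hη, hϕ, hmem_a, hmem_b⟩
  · simp only [intervalIntegral.integral_const_mul (-(π ^ 2 / 6 / 2))]
    rw [integral_integral_sin_mul_signPfaffian (Set.Ioo_subset_Icc_self hmem_a)
      (Set.Ioo_subset_Icc_self hmem_b), Real.sign_of_pos (sub_pos.2 hab)]
    ring

end OrientationProp

/-- The antiderivative of `(1 - cos ζ)⁻¹ (ζ - π + 2 sin ζ)` on `(0, 2π)` that vanishes at `π`. -/
noncomputable def rcPrimitive (x : ℝ) : ℝ :=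
  (π - x) * Real.cot (x / 2) + 6 * Real.log (Real.sin (x / 2))

lemma rcPrimitive_pi : rcPrimitive π = 0 := by
  simp [rcPrimitive]

lemma sin_half_pos {x : ℝ} (hx : x ∈ Set.Ioo 0 (2 * π)) : 0 < Real.sin (x / 2) :=
  Real.sin_pos_of_pos_of_lt_pi (by linarith [hx.1]) (by linarith [hx.2])

lemma one_sub_cos_eq_two_mul_sin_half_sq (x : ℝ) : 1 - Real.cos x = 2 * Real.sin (x / 2) ^ 2 := by
  rw [Real.sin_sq_eq_half_sub, mul_div_cancel₀ x two_ne_zero]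
  ring

lemma hasDerivAt_cot {x : ℝ} (hx : Real.sin x ≠ 0) :
    HasDerivAt Real.cot (-(Real.sin x ^ 2)⁻¹) x := by
  have hcot : Real.cot = fun x => Real.cos x / Real.sin x := funext Real.cot_eq_cos_div_sin
  rw [hcot]
  refine ((Real.hasDerivAt_cos x).div (Real.hasDerivAt_sin x) hx).congr_deriv ?_
  field_simp
  linarith [Real.sin_sq_add_cos_sq x]

lemma hasDerivAt_rcPrimitive {x : ℝ} (hx : x ∈ Set.Ioo 0 (2 * π)) :
    HasDerivAt rcPrimitive ((1 - Real.cos x)⁻¹ * (x - π + 2 * Real.sin x)) x := by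
  have hsin := (sin_half_pos hx).ne'
  have hhalf : HasDerivAt (fun x : ℝ => x / 2) (1 / 2) x := (hasDerivAt_id x).div_const 2
  have hcot : HasDerivAt (fun x : ℝ => Real.cot (x / 2)) (-(Real.sin (x / 2) ^ 2)⁻¹ * (1 / 2)) x :=
    HasDerivAt.comp (h₂ := Real.cot) x (hasDerivAt_cot hsin) hhalf
  have hdouble : Real.sin x = 2 * Real.sin (x / 2) * Real.cos (x / 2) := by
    rw [← Real.sin_two_mul, mul_div_cancel₀ x two_ne_zero]
  refine ((((hasDerivAt_id x).const_sub π).mul hcot).add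
    ((hhalf.sin.log hsin).const_mul 6)).congr_deriv ?_
  rw [one_sub_cos_eq_two_mul_sin_half_sq, hdouble, Real.cot_eq_cos_div_sin]
  simp only [id]
  field_simp
  ring

lemma uIcc_pi_subset_Ioo {φ : ℝ} (hφ : φ ∈ Set.Ioo 0 (2 * π)) :
    Set.uIcc π φ ⊆ Set.Ioo 0 (2 * π) :=
  Set.ordConnected_Ioo.uIcc_subset ⟨Real.pi_pos, by linarith [Real.pi_pos]⟩ hφ

lemma integral_inv_one_sub_cos_mul {φ : ℝ} (hφ : φ ∈ Set.Ioo 0 (2 * π)) :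
    ∫ ζ in π..φ, (1 - Real.cos ζ)⁻¹ * (ζ - π + 2 * Real.sin ζ) = rcPrimitive φ := by
  have hcont : ContinuousOn (fun ζ : ℝ => (1 - Real.cos ζ)⁻¹ * (ζ - π + 2 * Real.sin ζ))
      (Set.uIcc π φ) := by
    refine ContinuousOn.mul (ContinuousOn.inv₀ (by fun_prop) fun ζ hζ => ?_) (by fun_prop)
    have := sin_half_pos (uIcc_pi_subset_Ioo hφ hζ)
    rw [one_sub_cos_eq_two_mul_sin_half_sq]
    positivity
  rw [intervalIntegral.integral_eq_sub_of_hasDerivAt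
    (fun ζ hζ => hasDerivAt_rcPrimitive (uIcc_pi_subset_Ioo hφ hζ)) hcont.intervalIntegrable,
    rcPrimitive_pi, sub_zero]

lemma sin_sub_sin_mul_cot {a b : ℝ} (h : Real.sin ((b - a) / 2) ≠ 0) :
    (Real.sin a - Real.sin b) * Real.cot ((b - a) / 2) = -(Real.cos a + Real.cos b) := by
  have hneg : (a - b) / 2 = -((b - a) / 2) := by ring
  rw [Real.sin_sub_sin, Real.cos_add_cos, Real.cot_eq_cos_div_sin, hneg, Real.sin_neg, Real.cos_neg]
  field_simp

lemma ominus_eq_sub {a b : ℝ} (h : b - a ∈ Set.Ico 0 (2 * π)) : ominus b a = b - a := by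
  rwa [ominus, toIcoMod_eq_self, zero_add]

namespace OrientationProp

variable {c : (Fin 5 → ℂ) → ℝ}

lemma rc_eq (hc : OrientationProp c) {φ : ℝ} (hφ : φ ∈ Set.Ioo 0 (2 * π)) :
    rc c φ = (1 - Complex.exp (φ * Complex.I)) * ((rcPrimitive φ / 24 : ℝ) : ℂ) := by
  have hintegral : (∫ ζ in π..φ, (1 - Real.cos ζ)⁻¹ * ((1 / (2 * π)) ^ 3 *
      ∫ η in (0 : ℝ)..2 * π, ∫ ϕ in (0 : ℝ)..2 * π, ∫ ψ in (0 : ℝ)..2 * π,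
        Real.sin (η - ϕ) * c ![Complex.exp (η * Complex.I), Complex.exp (ϕ * Complex.I),
          Complex.exp (ψ * Complex.I), 1, Complex.exp (ζ * Complex.I)])) =
      -(1 / 12) * rcPrimitive φ := by
    rw [← integral_inv_one_sub_cos_mul hφ, ← intervalIntegral.integral_const_mul]
    refine intervalIntegral.integral_congr fun ζ hζ => ?_
    simp only [hc.integral_integral_integral_sin_sub_mul (uIcc_pi_subset_Ioo hφ hζ)]
    field_simp
    ring
  rw [rc, hintegral]
  push_cast
  ring

lemma vflat_eq (hc : OrientationProp c) {a b : ℝ}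
    (hab : b - a ∈ Set.Ioo 0 (2 * π)) :
    vflat c a b = ((b - a - π) * (Real.cos a + Real.cos b)
      + 6 * (Real.sin a - Real.sin b) * Real.log (Real.sin ((b - a) / 2))) / 24 := by
  have hexp : Complex.exp (a * Complex.I) * (1 - Complex.exp ((b - a : ℝ) * Complex.I)) =
      Complex.exp (a * Complex.I) - Complex.exp (b * Complex.I) := by
    rw [mul_sub, mul_one, ← Complex.exp_add, ← add_mul, ← Complex.ofReal_add, add_sub_cancel]
  rw [vflat, ominus_eq_sub (Set.Ioo_subset_Ico_self hab), hc.rc_eq hab, ← mul_assoc, hexp,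
    Complex.im_mul_ofReal, Complex.sub_im, Complex.exp_ofReal_mul_I_im, Complex.exp_ofReal_mul_I_im,
    rcPrimitive]
  linear_combination (π - (b - a)) / 24 * sin_sub_sin_mul_cot (sin_half_pos hab).ne'

end OrientationProp

/-- **The integrand `F_c^♭` for the orientation cocycle.** If `c` is the cocycle
`c(z̲) = -(ζ(2)/2)·(-1)^{z̲}`, then for `0 < φ₁ < φ₂ < 2π`, `F_c^♭(φ₁, φ₂)` is given by the
explicit elementary formula below. -/
theorem Fflat_orientation_cocycle (c : (Fin 5 → ℂ) → ℝ) (hc : OrientationProp c)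
    (φ₁ φ₂ : ℝ) (h1 : 0 < φ₁) (h12 : φ₁ < φ₂) (h2 : φ₂ < 2 * π) :
    Fflat c φ₁ φ₂
      = -(π ^ 2 / 6 / (4 * π ^ 2)) *
          ((3 * φ₁ - 2 * π) * (Real.cos φ₂ - 1) - (3 * φ₂ - 4 * π) * (Real.cos φ₁ - 1))
        + (3 * (π ^ 2 / 6) / (2 * π ^ 2)) *
          (Real.sin φ₁ * Real.log (Real.sin ((φ₂ - φ₁) / 2) / Real.sin (φ₁ / 2))
            - Real.sin φ₂ * Real.log (Real.sin ((φ₂ - φ₁) / 2) / Real.sin (φ₂ / 2))) := by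
  have hmem₁ : φ₁ - 0 ∈ Set.Ioo 0 (2 * π) := ⟨by linarith, by linarith⟩
  have hmem₂ : φ₂ - 0 ∈ Set.Ioo 0 (2 * π) := ⟨by linarith, by linarith⟩
  have hmem₁₂ : φ₂ - φ₁ ∈ Set.Ioo 0 (2 * π) := ⟨by linarith, by linarith⟩
  rw [Fflat, hc.integral_integral_sin_mul h1 h12 h2, hc.vflat_eq hmem₁₂, hc.vflat_eq hmem₁,
    hc.vflat_eq hmem₂]
  rw [sub_zero] at hmem₁ hmem₂
  rw [Real.log_div (sin_half_pos hmem₁₂).ne' (sin_half_pos hmem₁).ne',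
    Real.log_div (sin_half_pos hmem₁₂).ne' (sin_half_pos hmem₂).ne']
  simp only [sub_zero, Real.sin_zero, Real.cos_zero]
  field_simp
  ring
end

section
/- Define F : {(φ₁, φ₂) ∈ ℝ² : 0 < φ₁ < φ₂ < 2π} → ℝ by F(φ₁, φ₂) = −(ζ(2)/(4π²))·((3φ₁ − 2π)(cos(φ₂) − 1) − (3φ₂ − 4π)(cos(φ₁) − 1)) + (3ζ(2)/(2π²))·(sin(φ₁)·log(sin((φ₂−φ₁)/2)/sin(φ₁/2)) − sin(φ₂)·log(sin((φ₂−φ₁)/2)/sin(φ₂/2))). Then for every x ∈ (0,1): L₂(x) = ζ(2)/2 + (ζ(2)/(2π))·(arctan(2x/(1−x²)) − π/2) − ∫₀^{−(x+1)/(2x)} F(2·arccot(−t + (1−x)/(2x)), 2·arccot(−t − (1−x)/(2x))) dt + ∫₀^{(x+1)/2} F(2·arccot(−t + (1−x)/2), 2·arccot(−t − (1−x)/2)) dt − ∫₀^{1/2} F(2·arccot(−t + 1/2), 2·arccot(−t − 1/2)) dt + ∫₀^{x/2} F(2·arccot(−t + x/2), 2·arccot(−t − x/2)) dt. -/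
open Real

/-- Rogers' dilogarithm `L₂(x) = -(1/2)·∫₀ˣ (log t/(1-t) + log(1-t)/t) dt`. -/
noncomputable def rogersL2 (x : ℝ) : ℝ :=
  -(1 / 2) * ∫ t in (0:ℝ)..x, (Real.log t / (1 - t) + Real.log (1 - t) / t)

/-- `arccot(s) = π/2 - arctan(s)`, with values in `(0, π)`. -/
noncomputable def arccot (s : ℝ) : ℝ := π / 2 - Real.arctan s

/-- The explicit integrand `F_c^♭` for the orientation cocycle, with `ζ(2) = π²/6`. -/
noncomputable def Fc (φ₁ φ₂ : ℝ) : ℝ :=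
  -(π ^ 2 / 6 / (4 * π ^ 2)) *
      ((3 * φ₁ - 2 * π) * (Real.cos φ₂ - 1) - (3 * φ₂ - 4 * π) * (Real.cos φ₁ - 1))
    + (3 * (π ^ 2 / 6) / (2 * π ^ 2)) *
      (Real.sin φ₁ * Real.log (Real.sin ((φ₂ - φ₁) / 2) / Real.sin (φ₁ / 2))
        - Real.sin φ₂ * Real.log (Real.sin ((φ₂ - φ₁) / 2) / Real.sin (φ₂ / 2)))

/-!
In the coordinates `u = cot (φ₁ / 2)`, `v = cot (φ₂ / 2)` the function `Fc` is the value on `(1, 1)`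
of a 1-form `FcForm` on the half-plane `v < u`. The form is closed, because the `v`-derivative of
its kernel is antisymmetric in `u` and `v`, and it vanishes along the antidiagonal `v = -u`, because
the kernel is odd. Hence the integral of `Fc` along a translation path starting on the antidiagonal
is the value at the endpoint of one fixed primitive of the form. The four integrals of the formula
end at `(1/x, 1)`, `(-x, -1)`, `(0, -1)` and `(0, -x)`, so the right-hand side can be differentiated
in `x`, and its derivative is that of `L₂`. Both sides are continuous up to `x = 1`, where
both equal `ζ(2)`.
-/

open MeasureTheory

section LogIntegrals

lemma abs_log_div_one_sub_le {t : ℝ} (h0 : 0 < t) (h1 : t < 1) :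
    |log t / (1 - t)| ≤ 1 - log t := by
  have hlog : log t < 0 := log_neg h0 h1
  have hsub : 0 < 1 - t := sub_pos.2 h1
  have hmul : t * (1 - t⁻¹) ≤ t * log t :=
    mul_le_mul_of_nonneg_left (one_sub_inv_le_log_of_pos h0) h0.le
  rw [mul_sub, mul_inv_cancel₀ h0.ne'] at hmul
  rw [abs_of_neg (div_neg_of_neg_of_pos hlog hsub), ← neg_div, div_le_iff₀ hsub]
  linarith

lemma intervalIntegrable_log_div_one_sub :
    IntervalIntegrable (fun t : ℝ ↦ log t / (1 - t)) volume 0 1 := by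
  have hbound : IntervalIntegrable (fun t : ℝ ↦ 1 - log t) volume 0 1 :=
    intervalIntegrable_const.sub intervalIntegral.intervalIntegrable_log'
  rw [intervalIntegrable_iff_integrableOn_Ioo_of_le zero_le_one] at hbound ⊢
  have hmeas : Measurable fun t : ℝ ↦ log t / (1 - t) := by fun_prop
  refine hbound.mono' hmeas.aestronglyMeasurable ?_
  exact ae_restrict_of_forall_mem measurableSet_Ioo fun t ht ↦ abs_log_div_one_sub_le ht.1 ht.2

lemma intervalIntegrable_log_one_sub_div :
    IntervalIntegrable (fun t : ℝ ↦ log (1 - t) / t) volume 0 1 := by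
  simpa using (intervalIntegrable_log_div_one_sub.comp_sub_left 1).symm

lemma intervalIntegrable_pow_mul_log (n : ℕ) (a b : ℝ) :
    IntervalIntegrable (fun t : ℝ ↦ t ^ n * log t) volume a b :=
  intervalIntegral.intervalIntegrable_log'.continuousOn_mul (by fun_prop)

lemma integral_pow_mul_log (n : ℕ) (a b : ℝ) :
    ∫ t in a..b, t ^ n * log t =
      (b ^ (n + 1) * log b / (n + 1) - b ^ (n + 1) / (n + 1) ^ 2) -
        (a ^ (n + 1) * log a / (n + 1) - a ^ (n + 1) / (n + 1) ^ 2) := by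
  refine integral_eq_of_hasDerivAt_off_countable
    (fun t : ℝ ↦ t ^ (n + 1) * log t / (n + 1) - t ^ (n + 1) / (n + 1) ^ 2) _
    (Set.countable_singleton 0) ?_ ?_ (intervalIntegrable_pow_mul_log n a b)
  · simp only [pow_succ, mul_assoc]
    fun_prop
  · rintro t ⟨-, ht⟩
    have hpow : HasDerivAt (fun t : ℝ ↦ t ^ (n + 1)) ((n + 1) * t ^ n) t := by
      simpa using hasDerivAt_pow (n + 1) t
    refine (((hpow.mul (hasDerivAt_log ht)).div_const _).sub (hpow.div_const _)).congr_deriv ?_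
    have ht0 : t ≠ 0 := ht
    have hn : (n : ℝ) + 1 ≠ 0 := by positivity
    field_simp
    ring

lemma setIntegral_Ioo_pow_mul_log (n : ℕ) :
    ∫ t in Set.Ioo (0 : ℝ) 1, t ^ n * log t = -(1 / ((n : ℝ) + 1) ^ 2) := by
  rw [← integral_Ioc_eq_integral_Ioo, ← intervalIntegral.integral_of_le zero_le_one,
    integral_pow_mul_log]
  simp

lemma setIntegral_Ioo_norm_pow_mul_log (n : ℕ) :
    ∫ t in Set.Ioo (0 : ℝ) 1, ‖t ^ n * log t‖ = 1 / ((n : ℝ) + 1) ^ 2 := by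
  rw [← neg_eq_iff_eq_neg.2 (setIntegral_Ioo_pow_mul_log n), ← integral_neg]
  refine setIntegral_congr_fun measurableSet_Ioo fun t ht ↦ ?_
  exact norm_of_nonpos
    (mul_nonpos_of_nonneg_of_nonpos (pow_nonneg ht.1.le n) (log_neg ht.1 ht.2).le)

lemma hasSum_one_div_nat_add_one_sq :
    HasSum (fun n : ℕ ↦ 1 / ((n : ℝ) + 1) ^ 2) (π ^ 2 / 6) := by
  simpa using (hasSum_nat_add_iff' 1).2 hasSum_zeta_two

-- Integrate the geometric series `log t / (1 - t) = ∑ tⁿ log t` termwise.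
lemma integral_log_div_one_sub : ∫ t in (0 : ℝ)..1, log t / (1 - t) = -(π ^ 2 / 6) := by
  have hsum := hasSum_integral_of_summable_integral_norm
    (μ := volume.restrict (Set.Ioo (0 : ℝ) 1)) (F := fun (n : ℕ) t ↦ t ^ n * log t)
    (fun n ↦ (intervalIntegrable_iff_integrableOn_Ioo_of_le zero_le_one).1
      (intervalIntegrable_pow_mul_log n 0 1))
    (by simpa only [setIntegral_Ioo_norm_pow_mul_log] using hasSum_one_div_nat_add_one_sq.summable)
  simp only [setIntegral_Ioo_pow_mul_log] at hsum
  rw [hasSum_one_div_nat_add_one_sq.neg.unique hsum,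
    intervalIntegral.integral_of_le zero_le_one, integral_Ioc_eq_integral_Ioo]
  refine setIntegral_congr_fun measurableSet_Ioo fun t ht ↦ ?_
  rw [tsum_mul_right, tsum_geometric_of_lt_one ht.1.le ht.2, inv_mul_eq_div]

lemma integral_log_one_sub_div : ∫ t in (0 : ℝ)..1, log (1 - t) / t = -(π ^ 2 / 6) := by
  simpa [integral_log_div_one_sub] using
    intervalIntegral.integral_comp_sub_left (a := 0) (b := 1) (fun t : ℝ ↦ log t / (1 - t)) 1

end LogIntegrals

section RogersDilogarithm

lemma rogersL2_one : rogersL2 1 = π ^ 2 / 6 := by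
  rw [rogersL2, intervalIntegral.integral_add intervalIntegrable_log_div_one_sub
    intervalIntegrable_log_one_sub_div, integral_log_div_one_sub, integral_log_one_sub_div]
  ring

lemma continuousOn_rogersL2 : ContinuousOn rogersL2 (Set.Icc 0 1) := by
  have hint := (intervalIntegrable_iff' (by simp)).1
    (intervalIntegrable_log_div_one_sub.add intervalIntegrable_log_one_sub_div)
  have hcont := intervalIntegral.continuousOn_primitive_interval hint
  rw [Set.uIcc_of_le zero_le_one] at hcont
  exact continuousOn_const.mul hcont

lemma hasDerivAt_rogersL2 {x : ℝ} (hx : x ∈ Set.Ioo (0 : ℝ) 1) :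
    HasDerivAt rogersL2 (-(1 / 2) * (log x / (1 - x) + log (1 - x) / x)) x := by
  have hint := (intervalIntegrable_log_div_one_sub.add intervalIntegrable_log_one_sub_div).mono_set
    (Set.uIcc_subset_uIcc_left (Set.mem_uIcc_of_le hx.1.le hx.2.le))
  have hmeas : Measurable fun t : ℝ ↦ log t / (1 - t) + log (1 - t) / t := by fun_prop
  have hx0 : x ≠ 0 := hx.1.ne'
  have hx1 : 1 - x ≠ 0 := (sub_pos.2 hx.2).ne'
  exact (intervalIntegral.integral_hasDerivAt_right hint
    hmeas.stronglyMeasurable.stronglyMeasurableAtFilter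
    (by fun_prop (disch := assumption))).const_mul _

end RogersDilogarithm

section PlanarPoincare

lemma apply_eq_fst_mul_add_snd_mul (L : ℝ × ℝ →L[ℝ] ℝ) (z : ℝ × ℝ) :
    L z = z.1 * L (1, 0) + z.2 * L (0, 1) := by
  rw [← smul_eq_mul, ← smul_eq_mul, ← map_smul, ← map_smul, ← map_add]
  simp

lemma exists_hasFDerivAt_smul_fst_add_smul_snd {s : Set (ℝ × ℝ)} (hs : Convex ℝ s)
    (hso : IsOpen s) {P Q : ℝ × ℝ → ℝ} (hP : DifferentiableOn ℝ P s)
    (hQ : DifferentiableOn ℝ Q s)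
    (hPQ : ∀ p ∈ s, deriv (fun v ↦ P (p.1, v)) p.2 = deriv (fun u ↦ Q (u, p.2)) p.1) :
    ∃ J : ℝ × ℝ → ℝ, ∀ p ∈ s, HasFDerivAt J (P p • .fst ℝ ℝ ℝ + Q p • .snd ℝ ℝ ℝ) p := by
  have hP' (p) (hp : p ∈ s) := (hP.differentiableAt (hso.mem_nhds hp)).hasFDerivAt
  have hQ' (p) (hp : p ∈ s) := (hQ.differentiableAt (hso.mem_nhds hp)).hasFDerivAt
  have hclosed (p) (hp : p ∈ s) : fderiv ℝ P p (0, 1) = fderiv ℝ Q p (1, 0) := by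
    rw [← ((hP' p hp).comp_hasDerivAt p.2 (f := fun v ↦ (p.1, v))
        ((hasDerivAt_const _ _).prodMk (hasDerivAt_id _))).deriv,
      ← ((hQ' p hp).comp_hasDerivAt p.1 (f := fun u ↦ (u, p.2))
        ((hasDerivAt_id _).prodMk (hasDerivAt_const _ _))).deriv]
    exact hPQ p hp
  obtain ⟨J, hJ⟩ := hs.exists_forall_hasFDerivWithinAt_of_hasFDerivWithinAt_symmetric
    (fun p hp ↦ (((hP' p hp).smul_const (ContinuousLinearMap.fst ℝ ℝ ℝ)).add
      ((hQ' p hp).smul_const (ContinuousLinearMap.snd ℝ ℝ ℝ))).hasFDerivWithinAt)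
    (fun p hp x _ y _ ↦ by
      simp only [add_apply, smul_apply, ContinuousLinearMap.smulRight_apply,
        ContinuousLinearMap.coe_fst', ContinuousLinearMap.coe_snd', smul_eq_mul]
      rw [apply_eq_fst_mul_add_snd_mul (fderiv ℝ P p) x,
        apply_eq_fst_mul_add_snd_mul (fderiv ℝ P p) y,
        apply_eq_fst_mul_add_snd_mul (fderiv ℝ Q p) x,
        apply_eq_fst_mul_add_snd_mul (fderiv ℝ Q p) y, hclosed p hp]
      ring)
  exact ⟨J, fun p hp ↦ (hJ p hp).hasFDerivAt (hso.mem_nhds hp)⟩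

lemma convex_setOf_snd_lt_fst : Convex ℝ {p : ℝ × ℝ | p.2 < p.1} := by
  simpa [Set.preimage] using
    (convex_Ioi (𝕜 := ℝ) (0 : ℝ)).linear_preimage (.fst ℝ ℝ ℝ - .snd ℝ ℝ ℝ)

end PlanarPoincare

section Arccot

lemma sin_arccot (u : ℝ) : sin (arccot u) = 1 / √(1 + u ^ 2) := by
  rw [arccot, sin_pi_div_two_sub, cos_arctan]

lemma cos_arccot (u : ℝ) : cos (arccot u) = u / √(1 + u ^ 2) := by
  rw [arccot, cos_pi_div_two_sub, sin_arctan]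

lemma sin_two_mul_arccot (u : ℝ) : sin (2 * arccot u) = 2 * u / (1 + u ^ 2) := by
  rw [sin_two_mul, sin_arccot, cos_arccot]
  field_simp
  rw [sq_sqrt (by positivity)]

lemma cos_two_mul_arccot_sub_one (u : ℝ) : cos (2 * arccot u) - 1 = -2 / (1 + u ^ 2) := by
  rw [cos_two_mul', cos_arccot, sin_arccot, div_pow, div_pow, sq_sqrt (by positivity)]
  field_simp
  ring

lemma sin_arccot_sub_arccot (u v : ℝ) :
    sin (arccot v - arccot u) = (u - v) / (√(1 + u ^ 2) * √(1 + v ^ 2)) := by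
  rw [sin_sub, sin_arccot, sin_arccot, cos_arccot, cos_arccot]
  field_simp

end Arccot

section Kernel

lemma log_sub_comm (x y : ℝ) : log (x - y) = log (y - x) := by
  rw [← log_neg_eq_log, neg_sub]

lemma one_add_inv_sq {x : ℝ} (hx : x ≠ 0) : 1 + x⁻¹ ^ 2 = (1 + x ^ 2) / x ^ 2 := by
  field_simp
  ring

/-- The function `log √(1 + u²) = -log (sin (arccot u))`. -/
noncomputable def logSqrtOneAddSq (u : ℝ) : ℝ := log √(1 + u ^ 2)

lemma logSqrtOneAddSq_eq (u : ℝ) : logSqrtOneAddSq u = log (1 + u ^ 2) / 2 :=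
  log_sqrt (by positivity)

lemma logSqrtOneAddSq_zero : logSqrtOneAddSq 0 = 0 := by
  simp [logSqrtOneAddSq]

lemma logSqrtOneAddSq_neg (u : ℝ) : logSqrtOneAddSq (-u) = logSqrtOneAddSq u := by
  simp [logSqrtOneAddSq]

lemma logSqrtOneAddSq_inv {u : ℝ} (hu : u ≠ 0) :
    logSqrtOneAddSq u⁻¹ = logSqrtOneAddSq u - log u := by
  rw [logSqrtOneAddSq_eq, logSqrtOneAddSq_eq, one_add_inv_sq hu,
    log_div (by positivity) (by positivity), log_pow]
  push_cast
  ring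

lemma hasDerivAt_logSqrtOneAddSq (u : ℝ) :
    HasDerivAt logSqrtOneAddSq (u / (1 + u ^ 2)) u := by
  have hsq : HasDerivAt (fun u : ℝ ↦ 1 + u ^ 2) (2 * u) u := by
    simpa using (hasDerivAt_pow 2 u).const_add 1
  rw [funext logSqrtOneAddSq_eq]
  refine ((hsq.log (by positivity)).div_const 2).congr_deriv ?_
  field_simp

lemma differentiable_logSqrtOneAddSq : Differentiable ℝ logSqrtOneAddSq :=
  fun u ↦ (hasDerivAt_logSqrtOneAddSq u).differentiableAt

/-- Up to rational terms, `Fc (2 * arccot u) (2 * arccot v)` is `FcKernel u v - FcKernel v u`, and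
the 1-form `FcKernel u v du - FcKernel v u dv` is closed. Since `Real.log` is `log |·|`, both
orderings of `u` and `v` are allowed. -/
noncomputable def FcKernel (u v : ℝ) : ℝ :=
  (arctan v / (1 + u ^ 2) + u / (1 + u ^ 2) * (log (u - v) - logSqrtOneAddSq v)
    - (logSqrtOneAddSq u - logSqrtOneAddSq v) / (u - v)) / 2

lemma FcKernel_neg_neg (u v : ℝ) : FcKernel (-u) (-v) = -FcKernel u v := by
  have hlog : log (-u - -v) = log (u - v) := by rw [neg_sub_neg, log_sub_comm]
  have hdiv (c : ℝ) : c / (-u - -v) = -(c / (u - v)) := by rw [← div_neg]; ring_nf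
  rw [FcKernel, FcKernel, hlog, hdiv, logSqrtOneAddSq_neg, logSqrtOneAddSq_neg, arctan_neg, neg_sq]
  ring

-- The rational terms cancel because `u (1 + v²) - v (1 + u²) = (u - v) (1 - u v)`; what remains is
-- antisymmetric in `u` and `v`.
lemma hasDerivAt_FcKernel_right {u v : ℝ} (h : u ≠ v) :
    HasDerivAt (FcKernel u)
      (-(logSqrtOneAddSq u - logSqrtOneAddSq v) / (2 * (u - v) ^ 2)) v := by
  have huv : u - v ≠ 0 := sub_ne_zero.2 h
  have hsub : HasDerivAt (fun v ↦ u - v) (-1) v := (hasDerivAt_id v).const_sub u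
  have hlogSqrt := hasDerivAt_logSqrtOneAddSq v
  refine ((((hasDerivAt_arctan v).div_const (1 + u ^ 2)).add
    (((hsub.log huv).sub hlogSqrt).const_mul (u / (1 + u ^ 2)))).sub
    ((hlogSqrt.const_sub (logSqrtOneAddSq u)).div hsub huv)).div_const 2 |>.congr_deriv ?_
  field_simp
  ring

lemma differentiableAt_uncurry_FcKernel {p : ℝ × ℝ} (h : p.1 ≠ p.2) :
    DifferentiableAt ℝ (Function.uncurry FcKernel) p := by
  have hsub : p.1 - p.2 ≠ 0 := sub_ne_zero.2 h
  have hsq : 1 + p.1 ^ 2 ≠ 0 := by positivity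
  have harctan := differentiable_arctan
  have hlogSqrt := differentiable_logSqrtOneAddSq
  unfold Function.uncurry FcKernel
  fun_prop (disch := assumption)

lemma FcKernel_one_add_FcKernel_inv_one_sub_FcKernel_zero {x : ℝ} (h0 : x ≠ 0) (h1 : x ≠ 1) :
    FcKernel x 1 + FcKernel x⁻¹ 1 / x ^ 2 - FcKernel x 0 =
      π / 4 / (1 + x ^ 2) + 1 / 2 * (log x / (1 - x) + log (1 - x) / x) := by
  have hx1 : 1 - x ≠ 0 := sub_ne_zero.2 h1.symm
  have hinv : x⁻¹ - 1 = (1 - x) / x := by field_simp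
  simp only [FcKernel, hinv, one_add_inv_sq h0, log_sub_comm x 1, log_div hx1 h0,
    logSqrtOneAddSq_inv h0, logSqrtOneAddSq_zero, arctan_one, arctan_zero, sub_zero]
  rw [← neg_sub 1 x]
  field_simp
  ring

end Kernel

section Form

/-- The closed 1-form on the half-plane `v < u` whose restriction to the translation direction
`(1, 1)` is `Fc (2 * arccot u) (2 * arccot v)`. -/
noncomputable def FcForm (p : ℝ × ℝ) : ℝ × ℝ →L[ℝ] ℝ :=
  (FcKernel p.1 p.2 + π / 12 / (1 + p.1 ^ 2)) • .fst ℝ ℝ ℝ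
    + (π / 12 / (1 + p.2 ^ 2) - FcKernel p.2 p.1) • .snd ℝ ℝ ℝ

lemma FcForm_apply (p z : ℝ × ℝ) :
    FcForm p z = (FcKernel p.1 p.2 + π / 12 / (1 + p.1 ^ 2)) * z.1
      + (π / 12 / (1 + p.2 ^ 2) - FcKernel p.2 p.1) * z.2 :=
  rfl

lemma FcForm_antidiagonal (r : ℝ) : FcForm (r, -r) (1, -1) = 0 := by
  have hodd : FcKernel (-r) r = -FcKernel r (-r) := by simpa using FcKernel_neg_neg r (-r)
  rw [FcForm_apply, hodd, neg_sq]
  ring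

lemma exists_hasFDerivAt_FcForm :
    ∃ J : ℝ × ℝ → ℝ, ∀ p : ℝ × ℝ, p.2 < p.1 → HasFDerivAt J (FcForm p) p := by
  have hrat (u : ℝ) : DifferentiableAt ℝ (fun u : ℝ ↦ π / 12 / (1 + u ^ 2)) u := by
    have hsq : 1 + u ^ 2 ≠ 0 := by positivity
    fun_prop (disch := assumption)
  refine exists_hasFDerivAt_smul_fst_add_smul_snd (s := {p | p.2 < p.1})
    convex_setOf_snd_lt_fst (isOpen_lt continuous_snd continuous_fst)
    (fun p hp ↦ ?_) (fun p hp ↦ ?_) fun p hp ↦ ?_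
  · exact ((differentiableAt_uncurry_FcKernel (ne_of_gt hp)).add
      ((hrat p.1).comp p differentiableAt_fst)).differentiableWithinAt
  · exact (((hrat p.2).comp p differentiableAt_snd).sub
      ((differentiableAt_uncurry_FcKernel (p := p.swap) (ne_of_lt hp)).comp p
        (differentiableAt_snd.prodMk differentiableAt_fst))).differentiableWithinAt
  · dsimp only
    rw [((hasDerivAt_FcKernel_right (ne_of_gt hp)).add_const _).deriv,
      ((hasDerivAt_FcKernel_right (ne_of_lt hp)).const_sub _).deriv, ← neg_sub p.1 p.2, neg_sq]
    ring

-- At `u = v` the left side only involves `log 0 = 0`, with the value of the continuous extension.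
lemma Fc_two_mul_arccot (u v : ℝ) :
    Fc (2 * arccot u) (2 * arccot v) = FcForm (u, v) (1, 1) := by
  rcases eq_or_ne u v with rfl | huv
  · rw [Fc, FcForm_apply, cos_two_mul_arccot_sub_one, sub_self]
    field_simp
    ring
  have hsub : u - v ≠ 0 := sub_ne_zero.2 huv
  have hhalf : (2 * arccot v - 2 * arccot u) / 2 = arccot v - arccot u := by ring
  have hlog_u : log (sin (arccot v - arccot u) / sin (arccot u)) =
      log (u - v) - logSqrtOneAddSq v := by
    rw [sin_arccot_sub_arccot, sin_arccot, logSqrtOneAddSq, ← log_div hsub (by positivity)]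
    field_simp
  have hlog_v : log (sin (arccot v - arccot u) / sin (arccot v)) =
      log (u - v) - logSqrtOneAddSq u := by
    rw [sin_arccot_sub_arccot, sin_arccot, logSqrtOneAddSq, ← log_div hsub (by positivity)]
    field_simp
  rw [Fc, hhalf, mul_div_cancel_left₀ _ two_ne_zero, mul_div_cancel_left₀ _ two_ne_zero, hlog_u,
    hlog_v, sin_two_mul_arccot, sin_two_mul_arccot, cos_two_mul_arccot_sub_one,
    cos_two_mul_arccot_sub_one, FcForm_apply, FcKernel, FcKernel, log_sub_comm v u, ← neg_sub u v,
    arccot, arccot]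
  field_simp
  ring

end Form

section Integral

lemma Fc_two_mul_arccot_eq_mul_log (u v : ℝ) :
    Fc (2 * arccot u) (2 * arccot v) =
      π / 12 / (1 + u ^ 2) + π / 12 / (1 + v ^ 2)
        + (arctan v / (1 + u ^ 2) - arctan u / (1 + v ^ 2)
          + (1 - u * v) / ((1 + u ^ 2) * (1 + v ^ 2)) * ((u - v) * log (u - v))
          - u / (1 + u ^ 2) * logSqrtOneAddSq v + v / (1 + v ^ 2) * logSqrtOneAddSq u) / 2 := by
  have hslope : (logSqrtOneAddSq v - logSqrtOneAddSq u) / (v - u) =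
      (logSqrtOneAddSq u - logSqrtOneAddSq v) / (u - v) := by
    rw [← neg_sub u v, ← neg_sub (logSqrtOneAddSq u), neg_div_neg_eq]
  rw [Fc_two_mul_arccot, FcForm_apply, FcKernel, FcKernel, log_sub_comm v u, hslope]
  generalize (logSqrtOneAddSq u - logSqrtOneAddSq v) / (u - v) = slope
  field_simp
  ring

lemma continuous_Fc_two_mul_arccot {X : Type*} [TopologicalSpace X] {f g : X → ℝ}
    (hf : Continuous f) (hg : Continuous g) :
    Continuous fun x ↦ Fc (2 * arccot (f x)) (2 * arccot (g x)) := by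
  have hsq (u : ℝ) : 1 + u ^ 2 ≠ 0 := by positivity
  have hsq_mul (u v : ℝ) : (1 + u ^ 2) * (1 + v ^ 2) ≠ 0 := by positivity
  have hlogSqrt := differentiable_logSqrtOneAddSq.continuous
  simp only [Fc_two_mul_arccot_eq_mul_log]
  fun_prop (disch := simp [hsq, hsq_mul])

/-- The integral of `Fc (2 * arccot ·) (2 * arccot ·)` along the translation path that joins the
antidiagonal point `((u - v) / 2, -(u - v) / 2)` to `(u, v)`. -/
noncomputable def FcIntegral (u v : ℝ) : ℝ :=
  ∫ s in (0 : ℝ)..((u + v) / 2),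
    Fc (2 * arccot (s + (u - v) / 2)) (2 * arccot (s - (u - v) / 2))

lemma integral_Fc_eq_neg_FcIntegral {a T u v : ℝ} (hu : -T + a = u) (hv : -T - a = v) :
    ∫ t in (0 : ℝ)..T, Fc (2 * arccot (-t + a)) (2 * arccot (-t - a)) = -FcIntegral u v := by
  have ha : (u - v) / 2 = a := by linarith
  have hT : (u + v) / 2 = -T := by linarith
  rw [FcIntegral, ha, hT, ← intervalIntegral.integral_symm]
  simpa using intervalIntegral.integral_comp_neg (a := 0) (b := T)
    fun s ↦ Fc (2 * arccot (s + a)) (2 * arccot (s - a))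

lemma continuous_FcIntegral : Continuous fun p : ℝ × ℝ ↦ FcIntegral p.1 p.2 := by
  have hintegrand : Continuous (Function.uncurry fun (p : ℝ × ℝ) (s : ℝ) ↦
      Fc (2 * arccot (s + (p.1 - p.2) / 2)) (2 * arccot (s - (p.1 - p.2) / 2))) :=
    continuous_Fc_two_mul_arccot (by fun_prop) (by fun_prop)
  exact intervalIntegral.continuous_parametric_intervalIntegral_of_continuous hintegrand
    (by fun_prop)

lemma FcIntegral_self (u : ℝ) : FcIntegral u u = π / 6 * arctan u := by
  have hdiag (s : ℝ) : Fc (2 * arccot s) (2 * arccot s) = π / 6 * (1 + s ^ 2)⁻¹ := by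
    rw [Fc_two_mul_arccot, FcForm_apply]
    ring
  simp [FcIntegral, hdiag]

lemma FcForm_primitive_antidiagonal {J : ℝ × ℝ → ℝ}
    (hJ : ∀ p : ℝ × ℝ, p.2 < p.1 → HasFDerivAt J (FcForm p) p) {r s : ℝ} (hr : 0 < r)
    (hs : 0 < s) : J (r, -r) = J (s, -s) := by
  have hderiv (r : ℝ) (hr : 0 < r) : HasDerivAt (fun r ↦ J (r, -r)) 0 r :=
    ((hJ (r, -r) (neg_lt_self hr)).comp_hasDerivAt r
      ((hasDerivAt_id r).prodMk (hasDerivAt_neg r))).congr_deriv (FcForm_antidiagonal r)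
  exact isOpen_Ioi.is_const_of_deriv_eq_zero isPreconnected_Ioi
    (fun r hr ↦ (hderiv r hr).differentiableAt.differentiableWithinAt)
    (fun r hr ↦ (hderiv r hr).deriv) hr hs

lemma FcIntegral_eq_sub {J : ℝ × ℝ → ℝ}
    (hJ : ∀ p : ℝ × ℝ, p.2 < p.1 → HasFDerivAt J (FcForm p) p) {u v : ℝ} (h : v < u) :
    FcIntegral u v = J (u, v) - J ((u - v) / 2, -((u - v) / 2)) := by
  have hderiv (s : ℝ) : HasDerivAt (fun s ↦ J (s + (u - v) / 2, s - (u - v) / 2))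
      (Fc (2 * arccot (s + (u - v) / 2)) (2 * arccot (s - (u - v) / 2))) s := by
    rw [Fc_two_mul_arccot]
    exact (hJ (s + (u - v) / 2, s - (u - v) / 2) (by linarith)).comp_hasDerivAt s
      (((hasDerivAt_id s).add_const _).prodMk ((hasDerivAt_id s).sub_const _))
  have hcont : Continuous fun s ↦
      Fc (2 * arccot (s + (u - v) / 2)) (2 * arccot (s - (u - v) / 2)) :=
    continuous_Fc_two_mul_arccot (by fun_prop) (by fun_prop)
  rw [FcIntegral, intervalIntegral.integral_eq_sub_of_hasDerivAt (fun s _ ↦ hderiv s)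
    (hcont.intervalIntegrable _ _)]
  ring_nf

lemma hasFDerivAt_FcIntegral {p : ℝ × ℝ} (h : p.2 < p.1) :
    HasFDerivAt (fun p : ℝ × ℝ ↦ FcIntegral p.1 p.2) (FcForm p) p := by
  obtain ⟨J, hJ⟩ := exists_hasFDerivAt_FcForm
  refine ((hJ p h).sub_const (J (1, -1))).congr_of_eventuallyEq ?_
  filter_upwards [(isOpen_lt continuous_snd continuous_fst).mem_nhds h] with q hq
  have hq' : 0 < (q.1 - q.2) / 2 := half_pos (sub_pos.2 hq)
  rw [FcIntegral_eq_sub hJ hq, FcForm_primitive_antidiagonal hJ hq' one_pos]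

lemma hasDerivAt_FcIntegral {u v : ℝ → ℝ} {u' v' x : ℝ} (hu : HasDerivAt u u' x)
    (hv : HasDerivAt v v' x) (h : v x < u x) :
    HasDerivAt (fun y ↦ FcIntegral (u y) (v y)) (FcForm (u x, v x) (u', v')) x :=
  (hasFDerivAt_FcIntegral (p := (u x, v x)) h).comp_hasDerivAt
    (f := fun y ↦ (u y, v y)) x (hu.prodMk hv)

end Integral

section Formula

/-- The right-hand side of the formula for `L₂(x)`, with `arctan (2x / (1 - x²))` replaced by
`2 arctan x`, which extends it continuously to `x = 1`. -/
noncomputable def rogersFcSum (x : ℝ) : ℝ :=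
  π ^ 2 / 12 + π / 12 * (2 * arctan x - π / 2)
    + FcIntegral x⁻¹ 1 - FcIntegral (-x) (-1) + FcIntegral 0 (-1) - FcIntegral 0 (-x)

lemma rogersFcSum_one : rogersFcSum 1 = π ^ 2 / 6 := by
  rw [rogersFcSum, inv_one, FcIntegral_self, FcIntegral_self, arctan_neg, arctan_one]
  ring

lemma continuousAt_rogersFcSum {x : ℝ} (hx : x ≠ 0) : ContinuousAt rogersFcSum x := by
  have hint {u v : ℝ → ℝ} (hu : ContinuousAt u x) (hv : ContinuousAt v x) :
      ContinuousAt (fun y ↦ FcIntegral (u y) (v y)) x :=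
    continuous_FcIntegral.continuousAt.comp₂ hu hv
  have hinv := hint (continuousAt_inv₀ hx) (continuousAt_const (y := 1))
  have hneg := hint continuousAt_neg (continuousAt_const (y := -1))
  have hzero := hint (continuousAt_const (y := 0)) continuousAt_neg
  unfold rogersFcSum
  fun_prop

lemma hasDerivAt_rogersFcSum {x : ℝ} (hx : x ∈ Set.Ioo (0 : ℝ) 1) :
    HasDerivAt rogersFcSum (-(1 / 2) * (log x / (1 - x) + log (1 - x) / x)) x := by
  obtain ⟨h0, h1⟩ := hx
  have harctan : HasDerivAt (fun y ↦ π ^ 2 / 12 + π / 12 * (2 * arctan y - π / 2))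
      (π / 12 * (2 * (1 / (1 + x ^ 2)))) x :=
    ((((hasDerivAt_arctan x).const_mul 2).sub_const _).const_mul _).const_add _
  have hinv := hasDerivAt_FcIntegral (hasDerivAt_inv h0.ne') (hasDerivAt_const x (1 : ℝ))
    ((one_lt_inv₀ h0).2 h1)
  have hneg := hasDerivAt_FcIntegral (hasDerivAt_neg x) (hasDerivAt_const x (-1 : ℝ))
    (neg_lt_neg h1)
  have hzero := hasDerivAt_FcIntegral (hasDerivAt_const x (0 : ℝ)) (hasDerivAt_neg x)
    (neg_lt_zero.2 h0)
  refine ((((harctan.add hinv).sub hneg).add_const (FcIntegral 0 (-1))).sub hzero).congr_deriv ?_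
  have hkernel := FcKernel_one_add_FcKernel_inv_one_sub_FcKernel_zero h0.ne' h1.ne
  have hodd : FcKernel (-x) 0 = -FcKernel x 0 := by simpa using FcKernel_neg_neg x 0
  have hrat : π / 12 / (1 + x⁻¹ ^ 2) * -(x ^ 2)⁻¹ = -(π / 12 / (1 + x ^ 2)) := by
    rw [one_add_inv_sq h0.ne']
    field_simp
  simp only [FcForm_apply, FcKernel_neg_neg, hodd, neg_sq, mul_zero, add_zero, zero_add, add_mul,
    hrat]
  linear_combination -hkernel

lemma rogersL2_eq_rogersFcSum {x : ℝ} (hx : x ∈ Set.Ioo (0 : ℝ) 1) :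
    rogersL2 x = rogersFcSum x := by
  have hconst := constant_of_has_deriv_right_zero (f := rogersL2 - rogersFcSum) (a := x) (b := 1)
    ((continuousOn_rogersL2.mono (Set.Icc_subset_Icc_left hx.1.le)).sub fun y hy ↦
      (continuousAt_rogersFcSum (hx.1.trans_le hy.1).ne').continuousWithinAt)
    (fun y hy ↦ by
      have hy' : y ∈ Set.Ioo (0 : ℝ) 1 := ⟨hx.1.trans_le hy.1, hy.2⟩
      simpa using ((hasDerivAt_rogersL2 hy').sub (hasDerivAt_rogersFcSum hy')).hasDerivWithinAt)
    1 (Set.right_mem_Icc.2 hx.2.le)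
  simp only [Pi.sub_apply, rogersL2_one, rogersFcSum_one, sub_self] at hconst
  exact sub_eq_zero.1 hconst.symm

end Formula

/-- **An integral formula for Rogers' dilogarithm.** -/
theorem rogersL2_integral_formula (x : ℝ) (hx : x ∈ Set.Ioo (0:ℝ) 1) :
    rogersL2 x
      = π ^ 2 / 6 / 2
        + (π ^ 2 / 6 / (2 * π)) * (Real.arctan (2 * x / (1 - x ^ 2)) - π / 2)
        - (∫ t in (0:ℝ)..(-(x + 1) / (2 * x)),
            Fc (2 * arccot (-t + (1 - x) / (2 * x))) (2 * arccot (-t - (1 - x) / (2 * x))))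
        + (∫ t in (0:ℝ)..((x + 1) / 2),
            Fc (2 * arccot (-t + (1 - x) / 2)) (2 * arccot (-t - (1 - x) / 2)))
        - (∫ t in (0:ℝ)..(1 / 2 : ℝ),
            Fc (2 * arccot (-t + 1 / 2)) (2 * arccot (-t - 1 / 2)))
        + (∫ t in (0:ℝ)..(x / 2),
            Fc (2 * arccot (-t + x / 2)) (2 * arccot (-t - x / 2))) := by
  have hx0 : x ≠ 0 := hx.1.ne'
  rw [integral_Fc_eq_neg_FcIntegral (u := x⁻¹) (v := 1) (by field_simp; ring) (by field_simp; ring),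
    integral_Fc_eq_neg_FcIntegral (u := -x) (v := -1) (by ring) (by ring),
    integral_Fc_eq_neg_FcIntegral (u := 0) (v := -1) (by ring) (by ring),
    integral_Fc_eq_neg_FcIntegral (u := 0) (v := -x) (by ring) (by ring),
    ← two_mul_arctan (neg_one_lt_zero.trans hx.1) hx.2, rogersL2_eq_rogersFcSum hx, rogersFcSum]
  field_simp
  ring
end
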